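/- The integral of the series S_p over [0,1] satisfies ∫₀¹ S_p(x) dx = 1 − p/2; equivalently, ∑_{i=1}^∞ a_i(p)/(i+1) = 1 − p/2. (This is the normalization constant used to compute the design rate R = (1−ε)(1−e^{−α})/(μ + 1 − p/2) of the LT ensemble in Theorem 1.) -/

import Mathlib

open Real Filter

noncomputable def qp (p x : ℝ) : ℝ :=
  (Real.sqrt ((1 - p) ^ 2 + 4 * p * x) - (1 - p)) / (2 * p)

noncomputable def aCoeff (p : ℝ) (i : ℕ) : ℝ :=
  (∑ k ∈ Finset.range i, (Nat.choose (2 * i - 1) k : ℝ) * p ^ k) /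
    (i * (1 + p) ^ (2 * i - 1))

noncomputable def Gpart (p : ℝ) (N : ℕ) : ℝ := ∑ i ∈ Finset.Icc 1 N, aCoeff p i

noncomputable def Sp (p x : ℝ) : ℝ := - Real.log (qp p (1 - x))

noncomputable def rhoN (p μ : ℝ) (N : ℕ) (x : ℝ) : ℝ :=
  (μ + (∑ i ∈ Finset.Icc 1 N, aCoeff p i * x ^ i) + x ^ N) / (μ + Gpart p N + 1)

noncomputable def lamBarN (p μ : ℝ) (N : ℕ) (x : ℝ) : ℝ :=
  Real.exp (-(μ + Gpart p N + 1) * rhoN p μ N (1 - x))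

noncomputable def deSym (p μ : ℝ) (N : ℕ) (x : ℝ) : ℝ :=
  ((1 - p) + p * lamBarN p μ N x) * lamBarN p μ N x

noncomputable def cornerMap (p μ : ℝ) (N : ℕ) (α ε₁ ε₂ : ℝ) (y : ℝ) : ℝ :=
  ((1 - p) + p * Real.exp (-(α * (1 - ε₁)))) *
    Real.exp (-(α * (1 - ε₂)) * rhoN p μ N (1 - y))

/-!
For the integral, `q := qp p` inverts the quadratic `t ↦ t * (1 - p + p * t)`, so that
`x * log (q x)` is `(1 - p + p * q x)` times a value of the continuous function `t * log t`;
integrating `log ∘ q` by parts then leaves only boundary terms.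

For the series, Pascal's rule applied to the truncated binomial sums shows that
`a_{i+1} / (i + 2)` equals the difference `a_{i+1} - a_{i+2}` plus a multiple of
`catalan (i + 1) * z ^ (i + 1)`, where `z = p / (1 + p) ^ 2 ≤ 1 / 4`. The differences telescope
and the rest is summed by the Catalan generating function `2 / (1 + √(1 - 4 * z))`, which at this
`z` is `(1 + p) / max 1 p`.
-/

section Integral

variable {p x : ℝ}

lemma two_mul_mul_qp (hp : p ≠ 0) (x : ℝ) :
    2 * p * qp p x = √((1 - p) ^ 2 + 4 * p * x) - (1 - p) := by
  unfold qp
  field_simp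

lemma qp_zero (p : ℝ) : qp p 0 = (|1 - p| - (1 - p)) / (2 * p) := by
  simp [qp, sqrt_sq_eq_abs]

lemma qp_one (hp : 0 < p) : qp p 1 = 1 := by
  have h : (1 - p) ^ 2 + 4 * p * 1 = (1 + p) ^ 2 := by ring
  rw [qp, h, sqrt_sq (by positivity)]
  field_simp
  ring

lemma qp_pos (hp : 0 < p) (hx : 0 < x) : 0 < qp p x := by
  have h : 1 - p < √((1 - p) ^ 2 + 4 * p * x) :=
    lt_sqrt_of_sq_lt (lt_add_of_pos_right _ (by positivity))
  exact div_pos (sub_pos.2 h) (by positivity)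

lemma monotone_qp (hp : 0 ≤ p) : Monotone (qp p) := by
  intro x y hxy
  unfold qp
  gcongr

lemma qp_mul_add_eq_self (hp : 0 < p) (hx : 0 ≤ x) : qp p x * (1 - p + p * qp p x) = x := by
  have hsq : √((1 - p) ^ 2 + 4 * p * x) ^ 2 = (1 - p) ^ 2 + 4 * p * x := sq_sqrt (by positivity)
  have hroot := two_mul_mul_qp hp.ne' x
  have h : 4 * p * (qp p x * (1 - p + p * qp p x)) = 4 * p * x := by
    linear_combination (2 * p * qp p x + √((1 - p) ^ 2 + 4 * p * x) + (1 - p)) * hroot + hsq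
  exact mul_left_cancel₀ (by positivity) h

lemma continuous_qp (p : ℝ) : Continuous (qp p) := by
  unfold qp
  fun_prop

lemma hasDerivAt_qp (hp : 0 < p) (hx : 0 < x) :
    HasDerivAt (qp p) (1 - p + 2 * p * qp p x)⁻¹ x := by
  have hpos : 0 < (1 - p) ^ 2 + 4 * p * x := by positivity
  have hlin : HasDerivAt (fun y : ℝ => (1 - p) ^ 2 + 4 * p * y) (4 * p) x := by
    simpa using ((hasDerivAt_id x).const_mul (4 * p)).const_add ((1 - p) ^ 2)
  refine (((hlin.sqrt hpos.ne').sub_const (1 - p)).div_const (2 * p)).congr_deriv ?_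
  rw [two_mul_mul_qp hp.ne', add_sub_cancel]
  field_simp
  norm_num

/-- The antiderivative of `-log ∘ qp p` obtained by integrating by parts. -/
noncomputable def negLogQpPrimitive (p x : ℝ) : ℝ :=
  -(x * log (qp p x)) + (x + (1 - p) * qp p x) / 2

lemma continuousOn_negLogQpPrimitive (hp : 0 < p) :
    ContinuousOn (negLogQpPrimitive p) (Set.Ici 0) := by
  have hq := continuous_qp p
  have hcont : Continuous fun x => -((1 - p + p * qp p x) * (qp p x * log (qp p x)))
      + (x + (1 - p) * qp p x) / 2 :=
    ((continuous_const.add (hq.const_mul p)).mul (continuous_mul_log.comp hq)).neg.add (by fun_prop)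
  refine hcont.continuousOn.congr fun x hx => ?_
  rw [negLogQpPrimitive]
  linear_combination log (qp p x) * qp_mul_add_eq_self hp hx

lemma hasDerivAt_negLogQpPrimitive (hp : 0 < p) (hx : 0 < x) :
    HasDerivAt (negLogQpPrimitive p) (-log (qp p x)) x := by
  have hq := qp_pos hp hx
  have hq' := hasDerivAt_qp hp hx
  have hne : 1 - p + 2 * p * qp p x ≠ 0 := by
    rw [two_mul_mul_qp hp.ne', add_sub_cancel]
    positivity
  have hquot : x / qp p x = 1 - p + p * qp p x :=
    (div_eq_iff hq.ne').2 (by linarith [qp_mul_add_eq_self hp hx.le])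
  refine (((hasDerivAt_id x).mul (hq'.log hq.ne')).neg.add
    (((hasDerivAt_id x).add (hq'.const_mul (1 - p))).div_const 2)).congr_deriv ?_
  simp only [id]
  have hinv := mul_inv_cancel₀ hne
  linear_combination -(1 - p + 2 * p * qp p x)⁻¹ * hquot - hinv / 2

lemma integral_neg_log_qp (hp : 0 < p) :
    ∫ x in (0 : ℝ)..1, -log (qp p x) = (1 + (1 - p) / max 1 p) / 2 := by
  have hcont : ContinuousOn (negLogQpPrimitive p) (Set.Icc 0 1) :=
    (continuousOn_negLogQpPrimitive hp).mono Set.Icc_subset_Ici_self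
  have hderiv : ∀ x ∈ Set.Ioo (0 : ℝ) 1,
      HasDerivAt (negLogQpPrimitive p) (-log (qp p x)) x :=
    fun x hx => hasDerivAt_negLogQpPrimitive hp hx.1
  have hnonneg : ∀ x ∈ Set.Ioo (0 : ℝ) 1, 0 ≤ -log (qp p x) := fun x hx =>
    neg_nonneg.2 <| log_nonpos (qp_pos hp hx.1).le <|
      (monotone_qp hp.le hx.2.le).trans_eq (qp_one hp)
  have hint : IntervalIntegrable (fun x => -log (qp p x)) MeasureTheory.volume 0 1 := by
    rw [intervalIntegrable_iff_integrableOn_Ioc_of_le zero_le_one]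
    exact intervalIntegral.integrableOn_deriv_of_nonneg hcont hderiv hnonneg
  rw [intervalIntegral.integral_eq_sub_of_hasDerivAt_of_le zero_le_one hcont hderiv hint]
  simp only [negLogQpPrimitive, qp_zero, qp_one hp, log_one]
  rcases le_total p 1 with hp1 | hp1
  · rw [max_eq_left hp1, abs_of_nonneg (sub_nonneg.2 hp1)]
    ring
  · rw [max_eq_right hp1, abs_of_nonpos (sub_nonpos.2 hp1)]
    field_simp
    ring

lemma integral_Sp (hp : 0 < p) :
    ∫ x in (0 : ℝ)..1, Sp p x = (1 + (1 - p) / max 1 p) / 2 := by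
  rw [← integral_neg_log_qp hp]
  simpa [Sp] using
    intervalIntegral.integral_comp_sub_left (a := 0) (b := 1) (fun x => -log (qp p x)) 1

end Integral

section Catalan

variable {z : ℝ}

lemma sum_range_catalan_mul_one_div_four_pow (N : ℕ) :
    ∑ n ∈ Finset.range N, (catalan n : ℝ) * (1 / 4) ^ n =
      2 - 2 * (N.centralBinom * (1 / 4) ^ N) := by
  induction N with
  | zero => simp
  | succ N ih =>
    have hrec : ((N : ℝ) + 1) * (N + 1).centralBinom = 2 * (2 * N + 1) * N.centralBinom := by
      exact_mod_cast Nat.succ_mul_centralBinom_succ N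
    have hcat : ((N : ℝ) + 1) * catalan N = N.centralBinom := by
      exact_mod_cast succ_mul_catalan_eq_centralBinom N
    have hstep : ((N + 1).centralBinom : ℝ) = 4 * N.centralBinom - 2 * catalan N := by
      refine mul_left_cancel₀ (by positivity : (N : ℝ) + 1 ≠ 0) ?_
      linear_combination hrec + 2 * hcat
    rw [Finset.sum_range_succ, ih, hstep]
    ring

lemma sum_range_catalan_mul_one_div_four_pow_le (N : ℕ) :
    ∑ n ∈ Finset.range N, (catalan n : ℝ) * (1 / 4) ^ n ≤ 2 := by
  rw [sum_range_catalan_mul_one_div_four_pow]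
  exact sub_le_self _ (by positivity)

lemma summable_catalan_mul_one_div_four_pow :
    Summable fun n : ℕ => (catalan n : ℝ) * (1 / 4) ^ n :=
  summable_of_sum_range_le (fun _ => by positivity) sum_range_catalan_mul_one_div_four_pow_le

lemma norm_catalan_mul_pow_le (hz : |z| ≤ 1 / 4) (n : ℕ) :
    ‖(catalan n : ℝ) * z ^ n‖ ≤ catalan n * (1 / 4) ^ n := by
  rw [norm_mul, norm_pow, norm_eq_abs, norm_eq_abs, Nat.abs_cast]
  gcongr

lemma summable_catalan_mul_pow (hz : |z| ≤ 1 / 4) :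
    Summable fun n : ℕ => (catalan n : ℝ) * z ^ n :=
  summable_catalan_mul_one_div_four_pow.of_norm_bounded (norm_catalan_mul_pow_le hz)

lemma abs_tsum_catalan_mul_pow_le (hz : |z| ≤ 1 / 4) :
    |∑' n : ℕ, (catalan n : ℝ) * z ^ n| ≤ 2 :=
  (tsum_of_norm_bounded summable_catalan_mul_one_div_four_pow.hasSum
    (norm_catalan_mul_pow_le hz)).trans <|
    summable_catalan_mul_one_div_four_pow.tsum_le_of_sum_range_le
      sum_range_catalan_mul_one_div_four_pow_le

lemma catalan_succ_mul_pow_eq_sum_antidiagonal {R : Type*} [CommSemiring R] (z : R) (n : ℕ) :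
    (catalan (n + 1) : R) * z ^ n =
      ∑ ij ∈ Finset.HasAntidiagonal.antidiagonal n,
        (catalan ij.1 * z ^ ij.1) * (catalan ij.2 * z ^ ij.2) := by
  rw [catalan_succ', Nat.cast_sum, Finset.sum_mul]
  refine Finset.sum_congr rfl fun ij hij => ?_
  rw [← Finset.HasAntidiagonal.mem_antidiagonal.1 hij, pow_add]
  push_cast
  ring

lemma tsum_catalan_mul_pow_eq_one_add (hz : |z| ≤ 1 / 4) :
    ∑' n : ℕ, (catalan n : ℝ) * z ^ n = 1 + z * (∑' n : ℕ, (catalan n : ℝ) * z ^ n) ^ 2 := by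
  have hsum := summable_catalan_mul_pow hz
  have hsq : (∑' n : ℕ, (catalan n : ℝ) * z ^ n) ^ 2 =
      ∑' n : ℕ, (catalan (n + 1) : ℝ) * z ^ n := by
    simp only [catalan_succ_mul_pow_eq_sum_antidiagonal]
    rw [sq, tsum_mul_tsum_eq_tsum_sum_antidiagonal_of_summable_norm hsum.norm hsum.norm]
  rw [hsq, ← tsum_mul_left, hsum.tsum_eq_zero_add, catalan_zero, Nat.cast_one, pow_zero, mul_one]
  exact congrArg _ (tsum_congr fun n => by ring)

lemma hasSum_catalan_mul_pow (hz : |z| ≤ 1 / 4) :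
    HasSum (fun n : ℕ => (catalan n : ℝ) * z ^ n) (2 / (1 + √(1 - 4 * z))) := by
  convert (summable_catalan_mul_pow hz).hasSum using 1
  have hquad := tsum_catalan_mul_pow_eq_one_add hz
  have hbound := abs_tsum_catalan_mul_pow_le hz
  set C := ∑' n : ℕ, (catalan n : ℝ) * z ^ n
  have hzC : |z * C| ≤ 1 / 2 := by
    rw [abs_mul]
    calc |z| * |C| ≤ 1 / 4 * 2 := by gcongr
      _ = 1 / 2 := by norm_num
  -- The bound on `C` decides which root of the quadratic it is.
  have hsqrt : √(1 - 4 * z) = 1 - 2 * (z * C) := by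
    have hnonneg : 0 ≤ 1 - 2 * (z * C) := by linarith [le_of_abs_le hzC]
    rw [← sqrt_sq hnonneg]
    congr 1
    linear_combination 4 * z * hquad
  rw [div_eq_iff (by positivity), hsqrt]
  linear_combination -2 * hquad

lemma hasSum_catalan_mul_div_sq_pow {p : ℝ} (hp : 0 ≤ p) :
    HasSum (fun n : ℕ => (catalan n : ℝ) * (p / (1 + p) ^ 2) ^ n) ((1 + p) / max 1 p) := by
  have hz : |p / (1 + p) ^ 2| ≤ 1 / 4 := by
    rw [abs_of_nonneg (by positivity), div_le_div_iff₀ (by positivity) (by norm_num)]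
    linarith [sq_nonneg (1 - p)]
  have hdisc : 1 - 4 * (p / (1 + p) ^ 2) = ((1 - p) / (1 + p)) ^ 2 := by
    field_simp
    ring
  convert hasSum_catalan_mul_pow hz using 1
  have hmax : 2 * max 1 p = 1 + p + |1 - p| := by
    simpa [abs_sub_comm] using two_nsmul_sup_eq_add_add_abs_sub 1 p
  rw [hdisc, sqrt_sq_eq_abs, abs_div, abs_of_nonneg (by positivity : 0 ≤ 1 + p),
    div_eq_div_iff (by positivity) (by positivity), hmax]
  field_simp

end Catalan

section BinomialSums

lemma sum_range_succ_choose_succ_mul_pow {R : Type*} [CommSemiring R] (x : R) (n m : ℕ) :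
    ∑ k ∈ Finset.range (m + 1), ((n + 1).choose k : R) * x ^ k =
      (1 + x) * ∑ k ∈ Finset.range m, (n.choose k : R) * x ^ k + n.choose m * x ^ m := by
  induction m with
  | zero => simp
  | succ m ih =>
    rw [Finset.sum_range_succ, ih, Finset.sum_range_succ _ m, Nat.choose_succ_succ]
    push_cast
    ring

lemma centralBinom_succ_eq_two_mul_choose (n : ℕ) :
    (n + 1).centralBinom = 2 * (2 * n + 1).choose n := by
  rw [Nat.centralBinom_eq_two_mul_choose, mul_add_one, Nat.choose_succ_succ, Nat.choose_symm_half]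
  ring

lemma sum_range_choose_halfway_mul_pow_succ {R : Type*} [CommRing R] (x : R) (n : ℕ) :
    ∑ k ∈ Finset.range (n + 2), ((2 * n + 3).choose k : R) * x ^ k =
      (1 + x) ^ 2 * ∑ k ∈ Finset.range (n + 1), ((2 * n + 1).choose k : R) * x ^ k
        + (1 - x) * x ^ (n + 1) * (2 * n + 1).choose n := by
  have hmid : (2 * n + 2).choose (n + 1) = 2 * (2 * n + 1).choose n :=
    centralBinom_succ_eq_two_mul_choose n
  rw [sum_range_succ_choose_succ_mul_pow x (2 * n + 2) (n + 1),
    sum_range_succ_choose_succ_mul_pow x (2 * n + 1) n, hmid, Finset.sum_range_succ _ n]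
  push_cast
  ring

lemma sum_range_choose_mul_pow_le {R : Type*} [CommSemiring R] [PartialOrder R]
    [IsOrderedRing R] {x : R} (hx : 0 ≤ x) {m n : ℕ} (hmn : m ≤ n + 1) :
    ∑ k ∈ Finset.range m, (n.choose k : R) * x ^ k ≤ (1 + x) ^ n := by
  rw [add_comm 1 x, add_pow]
  simp only [one_pow, mul_one]
  simp only [mul_comm (x ^ _)]
  exact Finset.sum_le_sum_of_subset_of_nonneg (Finset.range_subset_range.2 hmn)
    fun _ _ _ => by positivity

end BinomialSums

section Coefficients

variable {p : ℝ}

lemma aCoeff_succ (p : ℝ) (n : ℕ) :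
    aCoeff p (n + 1) =
      (∑ k ∈ Finset.range (n + 1), ((2 * n + 1).choose k : ℝ) * p ^ k) /
        ((n + 1) * (1 + p) ^ (2 * n + 1)) := by
  simp [aCoeff, show 2 * (n + 1) - 1 = 2 * n + 1 by lia]

lemma aCoeff_nonneg (hp : 0 ≤ p) (i : ℕ) : 0 ≤ aCoeff p i := by
  unfold aCoeff
  positivity

lemma aCoeff_succ_le (hp : 0 ≤ p) (n : ℕ) : aCoeff p (n + 1) ≤ 1 / ((n : ℝ) + 1) := by
  rw [aCoeff_succ, div_le_div_iff₀ (by positivity) (by positivity), one_mul, mul_comm]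
  gcongr
  exact sum_range_choose_mul_pow_le hp (by lia)

lemma tendsto_aCoeff_atTop (hp : 0 ≤ p) : Tendsto (aCoeff p) atTop (nhds 0) :=
  (tendsto_add_atTop_iff_nat 1).1 <|
    squeeze_zero (fun n => aCoeff_nonneg hp (n + 1)) (aCoeff_succ_le hp)
      tendsto_one_div_add_atTop_nhds_zero_nat

lemma aCoeff_succ_div_eq_sub_add (hp : 0 ≤ p) (n : ℕ) :
    aCoeff p (n + 1) / ((n : ℝ) + 2) = aCoeff p (n + 1) - aCoeff p (n + 2) +
      (1 - p) / (2 * (1 + p)) * (catalan (n + 1) * (p / (1 + p) ^ 2) ^ (n + 1)) := by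
  have hcat : ((2 * n + 1).choose n : ℝ) = (n + 2) * catalan (n + 1) / 2 := by
    rw [eq_div_iff two_ne_zero, mul_comm]
    exact_mod_cast ((succ_mul_catalan_eq_centralBinom (n + 1)).trans
      (centralBinom_succ_eq_two_mul_choose n)).symm
  rw [aCoeff_succ p (n + 1), aCoeff_succ p n, show 2 * (n + 1) + 1 = 2 * n + 3 by ring,
    sum_range_choose_halfway_mul_pow_succ, hcat, div_pow, ← pow_mul]
  push_cast
  field_simp
  ring

lemma sum_range_aCoeff_succ_div (hp : 0 ≤ p) (N : ℕ) :
    ∑ n ∈ Finset.range N, aCoeff p (n + 1) / ((n : ℝ) + 2) =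
      aCoeff p 1 - aCoeff p (N + 1) + (1 - p) / (2 * (1 + p)) *
        ∑ n ∈ Finset.range N, (catalan (n + 1) : ℝ) * (p / (1 + p) ^ 2) ^ (n + 1) := by
  simp only [aCoeff_succ_div_eq_sub_add hp, Finset.sum_add_distrib, ← Finset.mul_sum]
  rw [Finset.sum_range_sub' fun n => aCoeff p (n + 1)]

lemma hasSum_aCoeff_succ_div (hp : 0 ≤ p) :
    HasSum (fun n : ℕ => aCoeff p (n + 1) / ((n : ℝ) + 2)) ((1 + (1 - p) / max 1 p) / 2) := by
  have hcat : HasSum (fun n : ℕ => (catalan (n + 1) : ℝ) * (p / (1 + p) ^ 2) ^ (n + 1))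
      ((1 + p) / max 1 p - 1) := by
    simpa using (hasSum_nat_add_iff' 1).2 (hasSum_catalan_mul_div_sq_pow hp)
  have hlim := (((tendsto_aCoeff_atTop hp).comp (tendsto_add_atTop_nat 1)).const_sub
    (aCoeff p 1)).add (hcat.tendsto_sum_nat.const_mul ((1 - p) / (2 * (1 + p))))
  have hvalue : aCoeff p 1 - 0 + (1 - p) / (2 * (1 + p)) * ((1 + p) / max 1 p - 1) =
      (1 + (1 - p) / max 1 p) / 2 := by
    have hmax : max 1 p ≠ 0 := by positivity
    have hone : aCoeff p 1 = 1 / (1 + p) := by simp [aCoeff]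
    rw [hone]
    field_simp
    ring
  rw [hasSum_iff_tendsto_nat_of_nonneg fun n =>
    div_nonneg (aCoeff_nonneg hp (n + 1)) (by positivity), ← hvalue]
  simpa only [sum_range_aCoeff_succ_div hp, Function.comp_apply] using hlim

end Coefficients

theorem stmt11_general {p : ℝ} (hp : 0 < p) :
    (∫ x in (0 : ℝ)..1, Sp p x) = (1 + (1 - p) / max 1 p) / 2 ∧
    HasSum (fun i : ℕ => aCoeff p (i + 1) / ((i : ℝ) + 2)) ((1 + (1 - p) / max 1 p) / 2) :=
  ⟨integral_Sp hp, hasSum_aCoeff_succ_div hp.le⟩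

theorem stmt11 (p : ℝ) (hp0 : 0 < p) (hp1 : p < 1) :
    (∫ x in (0 : ℝ)..1, Sp p x) = 1 - p / 2 ∧
    HasSum (fun i : ℕ => aCoeff p (i + 1) / ((i : ℝ) + 2)) (1 - p / 2) := by
  have hvalue : (1 + (1 - p) / max 1 p) / 2 = 1 - p / 2 := by rw [max_eq_left hp1.le]; ring
  exact hvalue ▸ stmt11_general hp0
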